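/- Let n be a positive integer, let σ and σ' be decorated permutations of order n, and let a < b < c < d < a + n be integers. Suppose (a b) is an allowed boundary transposition for σ, (c d) is an allowed boundary transposition for σ', and σ ∘ t_{a,b} = σ' ∘ t_{c,d}. Then ρ := σ ∘ t_{c,d} is a decorated permutation of order n, (c d) is an allowed boundary transposition for ρ with ρ ∘ t_{c,d} = σ, and (a b) is an allowed boundary transposition for ρ with ρ ∘ t_{a,b} = σ'. (Thus σ and σ' have a common parent in the poset of decorated permutations, forming a quadrilateral.) -/

import Mathlib

/-- A decorated permutation of order `n`: a bijection `σ : ℤ → ℤ` with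
`σ (i + n) = σ i + n` and `i ≤ σ i ≤ i + n` for all `i`. -/
def IsDecoratedPerm (n : ℤ) (σ : ℤ → ℤ) : Prop :=
  Function.Bijective σ ∧ (∀ i : ℤ, σ (i + n) = σ i + n) ∧ ∀ i : ℤ, i ≤ σ i ∧ σ i ≤ i + n

/-- The affine transposition `t_{a,b}`: swaps `a + m*n` and `b + m*n` for every `m : ℤ`
and fixes all integers not congruent to `a` or `b` modulo `n`. -/
def affT (n a b : ℤ) (i : ℤ) : ℤ :=
  if (i - a) % n = 0 then i + (b - a)
  else if (i - b) % n = 0 then i - (b - a)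
  else i

/-- `(a b)` is an allowed boundary transposition for `σ`: `a < b < a + n`,
`b ≤ σ a < σ b ≤ a + n`, and there is no `q` with `a < q < b` and `σ a < σ q < σ b`. -/
def AllowedBT (n : ℤ) (σ : ℤ → ℤ) (a b : ℤ) : Prop :=
  a < b ∧ b < a + n ∧ b ≤ σ a ∧ σ a < σ b ∧ σ b ≤ a + n ∧
    ¬ ∃ q : ℤ, a < q ∧ q < b ∧ σ a < σ q ∧ σ q < σ b

/-!
Write `t = t_{a,b}` and `s = t_{c,d}`. The residues of `a, b, c, d` modulo `n` are distinct, so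
`t` and `s` are commuting involutions, and `σ ∘ t = σ' ∘ s` gives `σ ∘ s = σ' ∘ t`; call this map
`ρ`. Whether a transposition is allowed depends only on the values on the interval between its
entries. As `s` fixes `[a, b]` pointwise and `t` fixes `[c, d]` pointwise, `ρ` agrees with `σ` on
the former and with `σ'` on the latter. Finally `ρ` is decorated because `ρ ∘ s = σ` is: the two
maps differ only on the residue classes of `c` and `d`, where allowedness of `(c d)` for `ρ`
supplies the bounds.
-/

open Function

section CommutingInvolutions

variable {α β : Type*} {f g : α → β} {s t : α → α}

theorem comp_eq_comp_of_involutive_of_commute (hs : Involutive s) (ht : Involutive t)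
    (hts : Function.Commute t s) (h : f ∘ t = g ∘ s) : f ∘ s = g ∘ t := by
  funext i
  calc f (s i) = f (t (t (s i))) := by rw [ht]
    _ = g (s (t (s i))) := congrFun h _
    _ = g (t i) := by rw [hts.eq, hs]

end CommutingInvolutions

section Residues

variable {n i j : ℤ}

theorem not_modEq_of_lt_of_lt_add (hij : i < j) (hji : j < i + n) : ¬ i ≡ j [ZMOD n] := fun h ↦
  (Int.le_of_dvd (sub_pos.2 hij) h.dvd).not_gt (sub_left_lt_of_lt_add hji)

theorem sub_self_eq_of_modEq {σ : ℤ → ℤ} (hσ : ∀ i, σ (i + n) = σ i + n)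
    (hij : i ≡ j [ZMOD n]) : σ i - i = σ j - j := by
  have hper : Periodic (fun i ↦ σ i - i) n := fun i ↦ by simp only [hσ, add_sub_add_right_eq_sub]
  obtain ⟨k, rfl⟩ := Int.modEq_iff_add_fac.1 hij
  rw [mul_comm]
  exact (hper.int_mul k i).symm

end Residues

section AffT

variable {n a b c d i : ℤ}

theorem affT_eq_ite (n a b i : ℤ) :
    affT n a b i =
      if i ≡ a [ZMOD n] then i + (b - a) else if i ≡ b [ZMOD n] then i - (b - a) else i := by
  simp only [affT, Int.ModEq, Int.emod_eq_emod_iff_emod_sub_eq_zero]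

theorem affT_of_not_modEq (ha : ¬ i ≡ a [ZMOD n]) (hb : ¬ i ≡ b [ZMOD n]) :
    affT n a b i = i := by
  rw [affT_eq_ite, if_neg ha, if_neg hb]

theorem affT_of_modEq_left (ha : i ≡ a [ZMOD n]) : affT n a b i = i + (b - a) := by
  rw [affT_eq_ite, if_pos ha]

theorem affT_of_modEq_right (hab : ¬ a ≡ b [ZMOD n]) (hb : i ≡ b [ZMOD n]) :
    affT n a b i = i - (b - a) := by
  rw [affT_eq_ite, if_neg fun ha ↦ hab (ha.symm.trans hb), if_pos hb]

theorem affT_add_period (n a b i : ℤ) : affT n a b (i + n) = affT n a b i + n := by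
  simp only [affT_eq_ite, Int.add_modulus_modEq_iff]
  split_ifs <;> ring

theorem affT_involutive (hab : ¬ a ≡ b [ZMOD n]) : Involutive (affT n a b) := by
  intro i
  by_cases ha : i ≡ a [ZMOD n]
  · have hb : i + (b - a) ≡ b [ZMOD n] := by simpa using ha.add_right (b - a)
    rw [affT_of_modEq_left ha, affT_of_modEq_right hab hb, add_sub_cancel_right]
  by_cases hb : i ≡ b [ZMOD n]
  · have ha' : i - (b - a) ≡ a [ZMOD n] := by simpa using hb.sub_right (b - a)
    rw [affT_of_modEq_right hab hb, affT_of_modEq_left ha', sub_add_cancel]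
  · rw [affT_of_not_modEq ha hb, affT_of_not_modEq ha hb]

theorem affT_commute (hab : ¬ a ≡ b [ZMOD n]) (hcd : ¬ c ≡ d [ZMOD n])
    (hac : ¬ a ≡ c [ZMOD n]) (had : ¬ a ≡ d [ZMOD n])
    (hbc : ¬ b ≡ c [ZMOD n]) (hbd : ¬ b ≡ d [ZMOD n]) :
    Function.Commute (affT n a b) (affT n c d) := by
  have hdisj : (affT_involutive hab).toPerm.Disjoint (affT_involutive hcd).toPerm := by
    intro i
    by_cases ha : i ≡ a [ZMOD n]
    · exact .inr <| affT_of_not_modEq (fun hc ↦ hac (ha.symm.trans hc))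
        fun hd ↦ had (ha.symm.trans hd)
    by_cases hb : i ≡ b [ZMOD n]
    · exact .inr <| affT_of_not_modEq (fun hc ↦ hbc (hb.symm.trans hc))
        fun hd ↦ hbd (hb.symm.trans hd)
    · exact .inl <| affT_of_not_modEq ha hb
  exact Equiv.congr_fun hdisj.commute.eq

theorem affT_of_lt_left (hia : i < a) (hab : a ≤ b) (hbi : b < i + n) : affT n a b i = i :=
  affT_of_not_modEq (not_modEq_of_lt_of_lt_add hia (by omega))
    (not_modEq_of_lt_of_lt_add (by omega) hbi)

theorem affT_of_right_lt (hab : a ≤ b) (hbi : b < i) (hia : i < a + n) : affT n a b i = i :=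
  affT_of_not_modEq (fun h ↦ not_modEq_of_lt_of_lt_add (by omega) hia h.symm)
    fun h ↦ not_modEq_of_lt_of_lt_add hbi (by omega) h.symm

end AffT

namespace AllowedBT

variable {n a b : ℤ} {σ τ : ℤ → ℤ}

theorem congr (hσ : AllowedBT n σ a b) (h : Set.EqOn σ τ (Set.Icc a b)) : AllowedBT n τ a b := by
  obtain ⟨hab, hban, hbσ, hlt, hσb, hgap⟩ := hσ
  have ha : σ a = τ a := h (Set.left_mem_Icc.2 hab.le)
  have hb : σ b = τ b := h (Set.right_mem_Icc.2 hab.le)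
  rw [ha] at hbσ
  rw [hb] at hσb
  rw [ha, hb] at hlt hgap
  refine ⟨hab, hban, hbσ, hlt, hσb, ?_⟩
  rintro ⟨q, haq, hqb, hq⟩
  exact hgap ⟨q, haq, hqb, by rwa [h ⟨haq.le, hqb.le⟩]⟩

theorem isDecoratedPerm_of_comp_affT (h : AllowedBT n τ a b)
    (hτ : IsDecoratedPerm n (τ ∘ affT n a b)) : IsDecoratedPerm n τ := by
  obtain ⟨hab, hban, hbτ, hlt, hτb, -⟩ := h
  obtain ⟨hbij, hper, hbounds⟩ := hτ
  have hinv : Involutive (affT n a b) := affT_involutive (not_modEq_of_lt_of_lt_add hab hban)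
  have hper' : ∀ i, τ (i + n) = τ i + n := fun i ↦ by
    simpa only [comp_apply, affT_add_period, hinv i] using hper (affT n a b i)
  refine ⟨(hinv.bijective.of_comp_iff τ).1 hbij, hper', fun i ↦ ?_⟩
  by_cases ha : i ≡ a [ZMOD n]
  · have := sub_self_eq_of_modEq hper' ha
    omega
  by_cases hb : i ≡ b [ZMOD n]
  · have := sub_self_eq_of_modEq hper' hb
    omega
  · simpa only [comp_apply, affT_of_not_modEq ha hb] using hbounds i

end AllowedBT

/-- Case `(a b)` vs `(c d)` with `a < b < c < d < a + n`: `σ` and `σ'`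
have a common parent `ρ = σ ∘ t_{c,d}`, forming a quadrilateral in the poset. -/
theorem common_parent_ab_cd (n : ℤ) (hn : 0 < n) (σ σ' : ℤ → ℤ)
    (hσ : IsDecoratedPerm n σ) (hσ' : IsDecoratedPerm n σ')
    (a b c d : ℤ) (hab : a < b) (hbc : b < c) (hcd : c < d) (hda : d < a + n)
    (h1 : AllowedBT n σ a b) (h2 : AllowedBT n σ' c d)
    (heq : σ ∘ affT n a b = σ' ∘ affT n c d) :
    IsDecoratedPerm n (σ ∘ affT n c d) ∧
    AllowedBT n (σ ∘ affT n c d) c d ∧ (σ ∘ affT n c d) ∘ affT n c d = σ ∧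
    AllowedBT n (σ ∘ affT n c d) a b ∧ (σ ∘ affT n c d) ∘ affT n a b = σ' := by
  have hs : Involutive (affT n c d) := affT_involutive <| not_modEq_of_lt_of_lt_add hcd h2.2.1
  have ht : Involutive (affT n a b) := affT_involutive <| not_modEq_of_lt_of_lt_add hab h1.2.1
  have hts : Function.Commute (affT n a b) (affT n c d) := by
    apply affT_commute <;> apply not_modEq_of_lt_of_lt_add <;> omega
  have hρ : σ ∘ affT n c d = σ' ∘ affT n a b :=
    comp_eq_comp_of_involutive_of_commute hs ht hts heq
  have hρσ : (σ ∘ affT n c d) ∘ affT n c d = σ := by rw [comp_assoc, hs.comp_self, comp_id]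
  have hρσ' : (σ ∘ affT n c d) ∘ affT n a b = σ' := by rw [hρ, comp_assoc, ht.comp_self, comp_id]
  have hρab : AllowedBT n (σ ∘ affT n c d) a b := h1.congr fun q hq ↦
    congrArg σ (affT_of_lt_left (hq.2.trans_lt hbc) hcd.le (by linarith [hq.1])).symm
  have hρcd : AllowedBT n (σ ∘ affT n c d) c d := hρ ▸ h2.congr fun q hq ↦
    congrArg σ' (affT_of_right_lt hab.le (hbc.trans_le hq.1) (hq.2.trans_lt hda)).symm
  exact ⟨hρcd.isDecoratedPerm_of_comp_affT (hρσ.symm ▸ hσ), hρcd, hρσ, hρab, hρσ'⟩
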